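/- arXiv:2007.11300 — 2 statements merged into one kernel-verified Lean document; each statement's English description precedes it below -/
import Mathlib

section
/- Let 0 < γ < 1 and ν > −1/2. Then for all x > 0, ∫_0^x e^{−γt} t^ν I_ν(t) dt < ( 2(2ν+7) / ((2ν+1)(1−γ)) ) · e^{−γx} x^ν I_{ν+1}(x). -/
open Real MeasureTheory

/-- Modified Bessel function of the first kind, `I_ν(x) = ∑_{k} (x/2)^{ν+2k} / (Γ(ν+k+1) k!)`. -/
noncomputable def besselI (ν x : ℝ) : ℝ :=
  ∑' k : ℕ, (x / 2) ^ (ν + 2 * (k : ℝ)) / (Real.Gamma (ν + (k : ℝ) + 1) * (Nat.factorial k : ℝ))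

/-- Modified Bessel function of the second kind, `K_ν(x) = ∫_0^∞ e^{-x cosh t} cosh(ν t) dt`. -/
noncomputable def besselK (ν x : ℝ) : ℝ :=
  ∫ t in Set.Ioi (0 : ℝ), Real.exp (-x * Real.cosh t) * Real.cosh (ν * t)

/-- Lower incomplete gamma function `γ(a, x) = ∫_0^x t^{a-1} e^{-t} dt`. -/
noncomputable def lowerIncGamma (a x : ℝ) : ℝ :=
  ∫ t in (0 : ℝ)..x, t ^ (a - 1) * Real.exp (-t)

noncomputable def bC (ν : ℝ) (k : ℕ) : ℝ := 1 / (Real.Gamma (ν + (k : ℝ) + 1) * (Nat.factorial k : ℝ))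

noncomputable def bB (ν z : ℝ) : ℝ := ∑' k : ℕ, bC ν k * z ^ k

lemma bC_pos {ν : ℝ} (h : -1 < ν) (k : ℕ) : 0 < bC ν k := by
  have hk : (0 : ℝ) ≤ k := Nat.cast_nonneg k
  have h1 : 0 < Real.Gamma (ν + k + 1) := Real.Gamma_pos_of_pos (by linarith)
  have h2 : (0 : ℝ) < (Nat.factorial k : ℝ) := by exact_mod_cast Nat.factorial_pos k
  unfold bC
  positivity

lemma bC_succ {ν : ℝ} (h : -1 < ν) (k : ℕ) :
    bC ν (k + 1) * ((ν + k + 1) * (k + 1)) = bC ν k := by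
  have hk : (0 : ℝ) ≤ k := Nat.cast_nonneg k
  have h0 : ν + k + 1 ≠ 0 := by linarith
  have h1 : Real.Gamma (ν + k + 1) ≠ 0 := (Real.Gamma_pos_of_pos (by linarith)).ne'
  have h2 : (Nat.factorial k : ℝ) ≠ 0 := by exact_mod_cast (Nat.factorial_pos k).ne'
  have h3 : (k : ℝ) + 1 ≠ 0 := by linarith
  unfold bC
  have e : ν + ((k + 1 : ℕ) : ℝ) + 1 = (ν + k + 1) + 1 := by push_cast; ring
  rw [e, Real.Gamma_add_one h0, Nat.factorial_succ]
  push_cast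
  field_simp

lemma bC_shift (ν : ℝ) (k : ℕ) :
    bC ν (k + 1) * (k + 1) = bC (ν + 1) k := by
  have h2 : (Nat.factorial k : ℝ) ≠ 0 := by exact_mod_cast (Nat.factorial_pos k).ne'
  have h3 : (k : ℝ) + 1 ≠ 0 := by positivity
  unfold bC
  have e : ν + ((k + 1 : ℕ) : ℝ) + 1 = ν + 1 + k + 1 := by push_cast; ring
  rw [e, Nat.factorial_succ]
  push_cast
  by_cases h1 : Real.Gamma (ν + 1 + k + 1) = 0
  · simp [h1]
  field_simp

lemma bC_rec {ν : ℝ} (h : -1 < ν) (k : ℕ) :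
    bC ν k = (ν + k + 1) * bC (ν + 1) k := by
  rw [← bC_shift, ← bC_succ h]; ring

lemma bB_summable {ν : ℝ} (h : -1 < ν) (z : ℝ) : Summable (fun k => bC ν k * z ^ k) := by
  by_cases hz : z = 0
  · subst hz
    refine summable_of_ne_finset_zero (s := {0}) ?_
    intro b hb
    simp at hb
    simp [hb]
  refine summable_of_ratio_test_tendsto_lt_one (l := 0) (by norm_num) ?_ ?_
  · exact Filter.Eventually.of_forall fun k => mul_ne_zero (bC_pos h k).ne' (pow_ne_zero _ hz)
  · have h1 : Filter.Tendsto (fun k : ℕ => |z| / (ν + 1) * (1 / ((k : ℝ) + 1))) Filter.atTop (nhds 0) := by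
      simpa using tendsto_one_div_add_atTop_nhds_zero_nat.const_mul (|z| / (ν + 1))
    refine squeeze_zero (fun k => by positivity) (fun k => ?_) h1
    have hk : (0 : ℝ) ≤ k := Nat.cast_nonneg k
    have hp := bC_pos h (k + 1)
    have hz' : 0 < |z| := abs_pos.mpr hz
    have hν : 0 < ν + 1 := by linarith
    have hν' : 0 < ν + k + 1 := by linarith
    rw [← bC_succ h k]
    simp only [norm_mul, norm_pow, Real.norm_eq_abs, abs_of_pos hp, abs_of_pos hν', pow_succ]
    rw [abs_of_pos (by linarith : (0 : ℝ) < k + 1)]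
    have : bC ν (k + 1) * (|z| ^ k * |z|) / (bC ν (k + 1) * ((ν + k + 1) * (k + 1)) * |z| ^ k)
      = |z| / (ν + k + 1) * (1 / (k + 1)) := by
      field_simp
    rw [this]
    gcongr
    linarith

lemma bB_pos {ν : ℝ} (h : -1 < ν) {z : ℝ} (hz : 0 ≤ z) : 0 < bB ν z := by
  refine (bB_summable h z).tsum_pos (fun k => ?_) 0 ?_
  · exact mul_nonneg (bC_pos h k).le (pow_nonneg hz k)
  · simpa using bC_pos h 0

lemma bB_hasDerivAt {ν : ℝ} (h : -1 < ν) (z : ℝ) : HasDerivAt (bB ν) (bB (ν + 1) z) z := by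
  have key := hasDerivAt_tsum_of_isPreconnected (𝕜 := ℝ) (F := ℝ)
    (g := fun k z => bC ν k * z ^ k) (g' := fun k z => bC ν k * (k * z ^ (k - 1)))
    (u := fun k : ℕ => bC ν k * (k * (|z| + 1) ^ (k - 1))) (t := Metric.ball 0 (|z| + 1))
    (y₀ := 0) (y := z) ?_ Metric.isOpen_ball (convex_ball _ _).isPreconnected ?_ ?_ ?_ ?_ ?_
  · refine HasDerivAt.congr_deriv key ?_
    rw [Summable.tsum_eq_zero_add]
    · simp only [bB, Nat.cast_zero, zero_mul, mul_zero, zero_add]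
      refine tsum_congr fun k => ?_
      rw [← bC_shift, Nat.add_sub_cancel]; push_cast; ring
    · rw [← summable_nat_add_iff 1]
      refine (bB_summable (ν := ν + 1) (by linarith) z).congr fun k => ?_
      rw [← bC_shift, Nat.add_sub_cancel]; push_cast; ring
  · rw [← summable_nat_add_iff 1]
    refine (bB_summable (ν := ν + 1) (by linarith) (|z| + 1)).congr fun k => ?_
    rw [← bC_shift, Nat.add_sub_cancel]; push_cast; ring
  · intro k y _
    exact (hasDerivAt_pow k y).const_mul _
  · intro k y hy
    rw [norm_mul, norm_mul, norm_pow, Real.norm_of_nonneg (bC_pos h k).le, Real.norm_of_nonneg (Nat.cast_nonneg k)]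
    have : ‖y‖ ≤ |z| + 1 := by simpa using (le_of_lt (by simpa using hy))
    have := (bC_pos h k).le
    gcongr
  · simp; positivity
  · exact bB_summable h 0
  · simp

lemma bB_rec {ν : ℝ} (h : -1 < ν) (z : ℝ) :
    bB ν z = (ν + 1) * bB (ν + 1) z + z * bB (ν + 1 + 1) z := by
  have s1 := bB_summable (ν := ν + 1) (by linarith) z
  have s2 := bB_summable (ν := ν + 1 + 1) (by linarith) z
  have s0 := bB_summable h z
  have e : ∀ k, bC ν k * z ^ k - (ν + 1) * (bC (ν + 1) k * z ^ k) = k * bC (ν + 1) k * z ^ k := by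
    intro k
    rw [bC_rec h]; ring
  have s3 : Summable (fun k : ℕ => (k : ℝ) * bC (ν + 1) k * z ^ k) := by
    simpa only [e] using s0.sub (s1.mul_left (ν + 1))
  have : bB ν z - (ν + 1) * bB (ν + 1) z = z * bB (ν + 1 + 1) z := by
    unfold bB
    rw [← tsum_mul_left, ← tsum_mul_left, ← s0.tsum_sub (s1.mul_left (ν + 1))]
    simp only [e]
    rw [s3.tsum_eq_zero_add]
    simp only [Nat.cast_zero, zero_mul, zero_add]
    refine tsum_congr fun k => ?_
    rw [← bC_shift (ν + 1)]; push_cast; ring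
  linarith

lemma besselI_eq {ν x : ℝ} (hx : 0 < x) : besselI ν x = (x / 2) ^ ν * bB ν (x ^ 2 / 4) := by
  unfold besselI bB
  rw [← tsum_mul_left]
  refine tsum_congr fun k => ?_
  have : (x / 2) ^ (ν + 2 * (k : ℝ)) = (x / 2) ^ ν * (x ^ 2 / 4) ^ k := by
    rw [Real.rpow_add (by positivity), Real.rpow_mul (by positivity), Real.rpow_natCast]
    congr 2
    norm_num [div_pow]
  rw [this, bC]; ring

/-- The entire function `(x/2)^{-ν} I_ν(x)`. -/
noncomputable def bA (ν x : ℝ) : ℝ := bB ν (x ^ 2 / 4)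

lemma bA_pos {ν : ℝ} (h : -1 < ν) (x : ℝ) : 0 < bA ν x := bB_pos h (by positivity)

lemma bA_deriv {ν : ℝ} (h : -1 < ν) (x : ℝ) : HasDerivAt (bA ν) (x / 2 * bA (ν + 1) x) x := by
  have h1 : HasDerivAt (fun x : ℝ => x ^ 2 / 4) (x / 2) x := by
    refine ((hasDerivAt_pow 2 x).div_const 4).congr_deriv ?_
    norm_num; ring
  have := (bB_hasDerivAt h (x ^ 2 / 4)).comp x h1
  rw [mul_comm] at this
  exact this

lemma bA_cont {ν : ℝ} (h : -1 < ν) : Continuous (bA ν) :=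
  continuous_iff_continuousAt.mpr fun x => (bA_deriv h x).continuousAt

lemma bA_rec {ν : ℝ} (h : -1 < ν) (x : ℝ) :
    bA ν x = (ν + 1) * bA (ν + 1) x + x ^ 2 / 4 * bA (ν + 1 + 1) x := bB_rec h _

/-- derivative of `e^{c x} x^{2ν+1} (p A + q x B)` -/
lemma main_deriv {ν : ℝ} (h : -(1/2) < ν) (c p q : ℝ) {x : ℝ} (hx : 0 < x) :
    HasDerivAt (fun x => Real.exp (c * x) * (x ^ (2 * ν + 1) * (p * bA ν x + q * bA (ν + 1) x)))
      (Real.exp (c * x) * x ^ (2 * ν) * (c * x * (p * bA ν x + q * bA (ν + 1) x)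
        + (2 * ν + 1) * (p * bA ν x + q * bA (ν + 1) x)
        + (p * x * (x / 2 * bA (ν + 1) x) + q * (2 * (bA ν x - (ν + 1) * bA (ν + 1) x))))) x := by
  have h1 : HasDerivAt (fun x => Real.exp (c * x)) (Real.exp (c * x) * c) x := by
    simpa using ((hasDerivAt_id x).const_mul c).exp
  have h2 : HasDerivAt (fun x : ℝ => x ^ (2 * ν + 1)) ((2 * ν + 1) * x ^ (2 * ν)) x := by
    simpa using Real.hasDerivAt_rpow_const (x := x) (p := 2 * ν + 1) (Or.inl hx.ne')
  have h3 := ((bA_deriv (ν := ν) (by linarith) x).const_mul p).add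
    ((bA_deriv (ν := ν + 1) (by linarith) x).const_mul q)
  refine (h1.mul (h2.mul h3)).congr_deriv ?_
  have e : x ^ (2 * ν + 1) = x ^ (2 * ν) * x := by
    rw [Real.rpow_add hx, Real.rpow_one]
  rw [bA_rec (ν := ν) (by linarith) x]
  simp only [Pi.add_apply, Pi.mul_apply]
  rw [e, bA_rec (ν := ν) (by linarith) x]
  ring

lemma main_deriv' {ν : ℝ} (h : -(1/2) < ν) (c s : ℝ) {x : ℝ} (hx : 0 < x) :
    HasDerivAt (fun x => Real.exp (c * x) * (x ^ (2 * ν + 1) * (bA ν x + s * (x / 2) * bA (ν + 1) x)))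
      (Real.exp (c * x) * x ^ (2 * ν) * ((2 * ν + 1) * bA ν x
        + (c + s) * x * bA ν x + (1 + c * s) * (x ^ 2 / 2) * bA (ν + 1) x)) x := by
  have h1 : HasDerivAt (fun x => Real.exp (c * x)) (Real.exp (c * x) * c) x := by
    simpa using ((hasDerivAt_id x).const_mul c).exp
  have h2 : HasDerivAt (fun x : ℝ => x ^ (2 * ν + 1)) ((2 * ν + 1) * x ^ (2 * ν)) x := by
    simpa using Real.hasDerivAt_rpow_const (x := x) (p := 2 * ν + 1) (Or.inl hx.ne')
  have h4 : HasDerivAt (fun x : ℝ => s * (x / 2)) (s * (1 / 2)) x :=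
    ((hasDerivAt_id x).div_const 2).const_mul s
  have h3 := (bA_deriv (ν := ν) (by linarith) x).add
    (h4.mul (bA_deriv (ν := ν + 1) (by linarith) x))
  refine (h1.mul (h2.mul h3)).congr_deriv ?_
  have e : x ^ (2 * ν + 1) = x ^ (2 * ν) * x := by
    rw [Real.rpow_add hx, Real.rpow_one]
  simp only [Pi.add_apply, Pi.mul_apply]
  rw [e, bA_rec (ν := ν) (by linarith) x]
  ring

lemma main_cont {ν : ℝ} (h : -(1/2) < ν) (c s : ℝ) :
    Continuous (fun x => Real.exp (c * x) * (x ^ (2 * ν + 1) * (bA ν x + s * (x / 2) * bA (ν + 1) x))) := by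
  have h1 : Continuous (fun x : ℝ => x ^ (2 * ν + 1)) :=
    Real.continuous_rpow_const (by linarith)
  have h2 := bA_cont (ν := ν) (by linarith)
  have h3 := bA_cont (ν := ν + 1) (by linarith)
  fun_prop

lemma ratio_lt {ν : ℝ} (h : -(1/2) < ν) {x : ℝ} (hx : 0 < x) :
    x / 2 * bA (ν + 1) x < bA ν x := by
  have hm : StrictMonoOn (fun x => Real.exp (1 * x) * (x ^ (2 * ν + 1) * (bA ν x + (-1) * (x / 2) * bA (ν + 1) x)))
      (Set.Ici 0) := by
    refine strictMonoOn_of_deriv_pos (convex_Ici 0) (main_cont h 1 (-1)).continuousOn ?_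
    intro y hy
    rw [interior_Ici] at hy
    have hy : 0 < y := hy
    rw [(main_deriv' h 1 (-1) hy).deriv]
    have := bA_pos (ν := ν) (by linarith) y
    have h21 : 0 < 2 * ν + 1 := by linarith
    have : 0 < (2 * ν + 1) * bA ν y := by positivity
    have e : (2 * ν + 1) * bA ν y + (1 + (-1)) * y * bA ν y + (1 + 1 * (-1)) * (y ^ 2 / 2) * bA (ν + 1) y
      = (2 * ν + 1) * bA ν y := by ring
    rw [e]
    positivity
  have := hm (Set.self_mem_Ici) (Set.mem_Ici.mpr hx.le) hx
  simp only [mul_zero, Real.zero_rpow (by linarith : 2 * ν + 1 ≠ 0), zero_mul] at this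
  have h5 : 0 < Real.exp (1 * x) := Real.exp_pos _
  have h6 : 0 < x ^ (2 * ν + 1) := Real.rpow_pos_of_pos hx _
  have := (mul_pos_iff_of_pos_left h6).mp ((mul_pos_iff_of_pos_left h5).mp this)
  linarith

noncomputable def bJ (γ ν x : ℝ) : ℝ := ∫ t in (0 : ℝ)..x, Real.exp (-γ * t) * bA ν t * t ^ (2 * ν)

lemma bJ_int {ν : ℝ} (γ : ℝ) (h : -(1/2) < ν) (a b : ℝ) :
    IntervalIntegrable (fun t => Real.exp (-γ * t) * bA ν t * t ^ (2 * ν)) volume a b := by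
  have h2 := bA_cont (ν := ν) (by linarith)
  refine (intervalIntegral.intervalIntegrable_rpow' (by linarith)).continuousOn_mul ?_
  fun_prop

lemma bJ_cont {ν : ℝ} (γ : ℝ) (h : -(1/2) < ν) : Continuous (bJ γ ν) :=
  intervalIntegral.continuous_primitive (fun a b => bJ_int γ h a b) 0

lemma bJ_deriv {ν : ℝ} (γ : ℝ) (h : -(1/2) < ν) {x : ℝ} (hx : 0 < x) :
    HasDerivAt (bJ γ ν) (Real.exp (-γ * x) * bA ν x * x ^ (2 * ν)) x := by
  have h2 := bA_cont (ν := ν) (by linarith)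
  have hc : ContinuousOn (fun t => Real.exp (-γ * t) * bA ν t * t ^ (2 * ν)) (Set.Ioi 0) := by
    refine ContinuousOn.mul (by fun_prop) ?_
    intro y hy
    exact (Real.continuousAt_rpow_const y _ (Or.inl (ne_of_gt hy))).continuousWithinAt
  refine intervalIntegral.integral_hasDerivAt_right (bJ_int γ h 0 x) ?_ (hc.continuousAt (Ioi_mem_nhds hx))
  exact hc.stronglyMeasurableAtFilter isOpen_Ioi x hx

lemma bJ_lt {ν γ : ℝ} (h : -(1/2) < ν) (hγ : γ < 1) {x : ℝ} (hx : 0 < x) :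
    (2 * ν + 1) * bJ γ ν x < Real.exp (-γ * x) * (x ^ (2 * ν + 1) * ((x + ν + 1) * bA (ν + 1) x)) := by
  have hm : StrictMonoOn (fun x => Real.exp (-γ * x) * (x ^ (2 * ν + 1) * (bA ν x + 1 * (x / 2) * bA (ν + 1) x))
      - (2 * ν + 1) * bJ γ ν x) (Set.Ici 0) := by
    refine strictMonoOn_of_deriv_pos (convex_Ici 0)
      ((main_cont h (-γ) 1).sub (continuous_const.mul (bJ_cont γ h))).continuousOn ?_
    intro y hy
    rw [interior_Ici] at hy
    have hy : 0 < y := hy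
    rw [((main_deriv' h (-γ) 1 hy).fun_sub ((bJ_deriv γ h hy).const_mul (2 * ν + 1))).deriv]
    have h1 := bA_pos (ν := ν) (by linarith) y
    have h2 := bA_pos (ν := ν + 1) (by linarith) y
    have h21 : 0 < 1 - γ := by linarith
    have : 0 < Real.exp (-γ * y) * y ^ (2 * ν) * ((1 - γ) * (y * bA ν y + y ^ 2 / 2 * bA (ν + 1) y)) := by
      positivity
    linarith
  have := hm (Set.self_mem_Ici) (Set.mem_Ici.mpr hx.le) hx
  simp only [mul_zero, Real.zero_rpow (by linarith : 2 * ν + 1 ≠ 0), zero_mul] at this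
  have e0 : bJ γ ν 0 = 0 := by simp [bJ]
  rw [e0] at this
  have hr := ratio_lt (ν := ν + 1) (by linarith) hx
  have hrec := bA_rec (ν := ν) (by linarith) x
  have h5 : 0 < Real.exp (-γ * x) := Real.exp_pos _
  have h6 : 0 < x ^ (2 * ν + 1) := Real.rpow_pos_of_pos hx _
  have h7 : bA ν x + 1 * (x / 2) * bA (ν + 1) x ≤ (x + ν + 1) * bA (ν + 1) x := by
    have := mul_lt_mul_of_pos_left hr (by positivity : 0 < x / 2)
    nlinarith
  have h8 := mul_le_mul_of_nonneg_left (mul_le_mul_of_nonneg_left h7 h6.le) h5.le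
  linarith

lemma final_aux {ν γ : ℝ} (h : -(1/2) < ν) (hγ0 : 0 < γ) (hγ : γ < 1) {x : ℝ} (hx : 0 < x) :
    bJ γ ν x < (2 * ν + 7) / ((2 * ν + 1) * (1 - γ)) *
      (Real.exp (-γ * x) * (x ^ (2 * ν + 1) * bA (ν + 1) x)) := by
  have g1 : 0 < 1 - γ := by linarith
  have n1 : 0 < 2 * ν + 1 := by linarith
  have small : ∀ x : ℝ, 0 < x → x ≤ (ν + 6) / (1 - γ) → bJ γ ν x < (2 * ν + 7) / ((2 * ν + 1) * (1 - γ)) *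
      (Real.exp (-γ * x) * (x ^ (2 * ν + 1) * bA (ν + 1) x)) := by
    intro x hx hle
    rw [le_div_iff₀ g1] at hle
    have hj := bJ_lt h hγ hx
    have hA := bA_pos (ν := ν + 1) (by linarith) x
    have hW : 0 < Real.exp (-γ * x) * (x ^ (2 * ν + 1) * bA (ν + 1) x) := by positivity
    set W := Real.exp (-γ * x) * (x ^ (2 * ν + 1) * bA (ν + 1) x) with hWd
    have hj' : (2 * ν + 1) * bJ γ ν x < (x + ν + 1) * W := by rw [hWd]; linarith
    rw [div_mul_eq_mul_div, lt_div_iff₀ (by positivity)]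
    have : (x + ν + 1) * (1 - γ) ≤ 2 * ν + 7 := by nlinarith
    have h1 := mul_lt_mul_of_pos_right hj' g1
    have h2 := mul_le_mul_of_nonneg_right this hW.le
    nlinarith
  rcases le_total x ((ν + 6) / (1 - γ)) with hle | hge
  · exact small x hx hle
  set x0 := (ν + 6) / (1 - γ) with hx0
  have x0pos : 0 < x0 := div_pos (by linarith) g1
  set C := (2 * ν + 7) / ((2 * ν + 1) * (1 - γ)) with hC
  have hCg : 1 ≤ C * (1 - γ) := by
    have : C * (1 - γ) = (2 * ν + 7) / (2 * ν + 1) := by rw [hC]; field_simp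
    rw [this, le_div_iff₀ n1]; linarith
  have hCpos : 0 < C := div_pos (by linarith) (by positivity)
  have hd : ∀ y, 0 < y → HasDerivAt (fun x => C * (Real.exp (-γ * x) * (x ^ (2 * ν + 1) * (0 * bA ν x + 1 * bA (ν + 1) x))) - bJ γ ν x) _ y :=
    fun y hy => ((main_deriv h (-γ) 0 1 hy).const_mul C).fun_sub (bJ_deriv γ h hy)
  have hm : MonotoneOn (fun x => C * (Real.exp (-γ * x) * (x ^ (2 * ν + 1) * (0 * bA ν x + 1 * bA (ν + 1) x))) - bJ γ ν x) (Set.Ici x0) := by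
    refine monotoneOn_of_deriv_nonneg (convex_Ici x0) ?_ ?_ ?_
    · intro y hy
      exact (hd y (lt_of_lt_of_le x0pos hy)).continuousAt.continuousWithinAt
    · intro y hy
      rw [interior_Ici] at hy
      exact (hd y (lt_trans x0pos hy)).differentiableAt.differentiableWithinAt
    · intro y hy
      rw [interior_Ici] at hy
      have hy : x0 < y := hy
      have hy0 : 0 < y := x0pos.trans hy
      rw [(hd y hy0).deriv]
      have hr := ratio_lt h hy0
      have hA := bA_pos (ν := ν) (by linarith) y
      have hB := bA_pos (ν := ν + 1) (by linarith) y
      have hyg : 2 ≤ y * (1 - γ) := by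
        have := hy.le
        rw [hx0, div_le_iff₀ g1] at this
        linarith
      have key : 0 ≤ C * (2 * bA ν y - bA (ν + 1) y - γ * y * bA (ν + 1) y) - bA ν y := by
        have a1 : y * bA (ν + 1) y ≤ 2 * bA ν y := by linarith
        have a2 : γ * (y * bA (ν + 1) y) ≤ γ * (2 * bA ν y) := mul_le_mul_of_nonneg_left a1 hγ0.le
        have a3 : bA (ν + 1) y ≤ (1 - γ) * bA ν y := by
          have b1 : 2 * bA (ν + 1) y ≤ y * (1 - γ) * bA (ν + 1) y :=
            mul_le_mul_of_nonneg_right hyg hB.le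
          have b2 := mul_le_mul_of_nonneg_left a1 g1.le
          linarith
        have a4 : (1 - γ) * bA ν y ≤ 2 * bA ν y - bA (ν + 1) y - γ * y * bA (ν + 1) y := by
          linarith
        have a5 := mul_le_mul_of_nonneg_left a4 hCpos.le
        have a6 := mul_le_mul_of_nonneg_right hCg hA.le
        linarith
      have : 0 ≤ Real.exp (-γ * y) * y ^ (2 * ν) * (C * (2 * bA ν y - bA (ν + 1) y - γ * y * bA (ν + 1) y) - bA ν y) := by
        positivity
      linarith
  have hs := small x0 x0pos le_rfl
  have := hm Set.self_mem_Ici (Set.mem_Ici.mpr hge) hge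
  simp only [zero_mul, zero_add, one_mul] at this
  linarith

theorem stmt_5 (γ ν : ℝ) (hγ0 : 0 < γ) (hγ1 : γ < 1) (hν : -(1/2) < ν) (x : ℝ) (hx : 0 < x) :
    ∫ t in (0 : ℝ)..x, Real.exp (-γ * t) * t ^ ν * besselI ν t <
      (2 * (2 * ν + 7) / ((2 * ν + 1) * (1 - γ))) *
        (Real.exp (-γ * x) * x ^ ν * besselI (ν + 1) x) := by
  have e1 : ∫ t in (0 : ℝ)..x, Real.exp (-γ * t) * t ^ ν * besselI ν t
      = (1 / 2) ^ ν * bJ γ ν x := by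
    unfold bJ
    rw [← intervalIntegral.integral_const_mul]
    refine intervalIntegral.integral_congr_ae (Filter.Eventually.of_forall fun t ht => ?_)
    rw [Set.uIoc_of_le hx.le] at ht
    have ht0 : 0 < t := ht.1
    rw [besselI_eq ht0, div_eq_mul_one_div, Real.mul_rpow ht0.le (by norm_num), two_mul ν, Real.rpow_add ht0, bA]
    ring
  have e2 : (2 * (2 * ν + 7) / ((2 * ν + 1) * (1 - γ))) *
        (Real.exp (-γ * x) * x ^ ν * besselI (ν + 1) x) = (1 / 2) ^ ν * ((2 * ν + 7) / ((2 * ν + 1) * (1 - γ)) *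
      (Real.exp (-γ * x) * (x ^ (2 * ν + 1) * bA (ν + 1) x))) := by
    have e3 : x ^ (2 * ν + 1) = x ^ ν * x ^ ν * x := by
      rw [Real.rpow_add hx, Real.rpow_one, two_mul, Real.rpow_add hx]
    rw [besselI_eq hx, Real.rpow_add (by positivity), Real.rpow_one, div_eq_mul_one_div x 2, Real.mul_rpow hx.le (by norm_num), e3, bA]
    ring
  rw [e1, e2]
  exact mul_lt_mul_of_pos_left (final_aux hν hγ0 hγ1 hx) (by positivity)
end

section
/- Let 0 < γ < 1 and ν > −1/2. Then for all x > 0, ∫_0^x e^{−γt} t^ν I_ν(t) dt < ( (2ν+7) / ((2ν+1)(1−γ)) ) · e^{−γx} x^ν I_ν(x). -/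
open Real MeasureTheory

noncomputable def bF (μ z : ℝ) : ℝ :=
  ∑' k : ℕ, z ^ k / (Real.Gamma (μ + (k : ℝ) + 1) * (Nat.factorial k : ℝ))

lemma bF_den_pos {μ : ℝ} (hμ : -1 < μ) (k : ℕ) :
    0 < Real.Gamma (μ + (k : ℝ) + 1) * (Nat.factorial k : ℝ) := by
  have hk : (0 : ℝ) ≤ k := Nat.cast_nonneg k
  have := Real.Gamma_pos_of_pos (show 0 < μ + (k : ℝ) + 1 by linarith)
  positivity

lemma bF_gamma {μ : ℝ} (hμ : -1 < μ) (k : ℕ) :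
    Real.Gamma (μ + ((k + 1 : ℕ) : ℝ) + 1) = (μ + k + 1) * Real.Gamma (μ + k + 1) := by
  have hk : (0 : ℝ) ≤ k := Nat.cast_nonneg k
  rw [← Real.Gamma_add_one (by linarith)]
  push_cast; congr 1; ring

lemma bF_summable {μ : ℝ} (hμ : -1 < μ) (z : ℝ) :
    Summable (fun k : ℕ => z ^ k / (Real.Gamma (μ + (k : ℝ) + 1) * (Nat.factorial k : ℝ))) := by
  refine summable_of_ratio_norm_eventually_le (r := 1/2) (by norm_num) ?_
  obtain ⟨N, hN⟩ := exists_nat_gt (2 * |z|)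
  filter_upwards [Filter.eventually_ge_atTop (N + 1)] with k hk
  have hk' : (N : ℝ) + 1 ≤ k := by exact_mod_cast hk
  have hN0 : (0 : ℝ) ≤ N := Nat.cast_nonneg N
  have hd := bF_den_pos hμ k
  have hg := bF_gamma hμ k
  have e : z ^ (k+1) / (Real.Gamma (μ + ((k + 1 : ℕ) : ℝ) + 1) * (Nat.factorial (k+1) : ℝ))
      = (z / ((μ + k + 1) * (k + 1))) * (z ^ k / (Real.Gamma (μ + (k : ℝ) + 1) * (Nat.factorial k : ℝ))) := by
    rw [hg, Nat.factorial_succ]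
    push_cast
    rw [div_mul_div_comm, pow_succ]
    congr 1 <;> ring
  rw [e, norm_mul]
  refine mul_le_mul_of_nonneg_right ?_ (norm_nonneg _)
  rw [norm_div, Real.norm_eq_abs, Real.norm_eq_abs]
  have h1 : (1:ℝ) ≤ μ + k + 1 := by linarith
  rw [abs_of_pos (show 0 < (μ + k + 1) * ((k:ℝ) + 1) by positivity), div_le_iff₀ (by positivity)]
  nlinarith

lemma bF_hasDerivAt {μ : ℝ} (hμ : -1 < μ) (z : ℝ) :
    HasDerivAt (bF μ) (bF (μ + 1) z) z := by
  have key : ∀ (k : ℕ) (y : ℝ),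
      ((k + 1 : ℕ) : ℝ) * y ^ (k + 1 - 1) / (Real.Gamma (μ + ((k + 1 : ℕ) : ℝ) + 1) * (Nat.factorial (k + 1) : ℝ))
      = y ^ k / (Real.Gamma ((μ + 1) + (k : ℝ) + 1) * (Nat.factorial k : ℝ)) := by
    intro k y
    have e : (μ + 1) + (k : ℝ) + 1 = μ + ((k + 1 : ℕ) : ℝ) + 1 := by push_cast; ring
    have h1 := bF_den_pos hμ (k + 1)
    have h2 := bF_den_pos (show -1 < μ + 1 by linarith) k
    rw [div_eq_div_iff h1.ne' h2.ne', e, Nat.factorial_succ]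
    simp only [Nat.add_sub_cancel]
    push_cast
    ring
  set g' : ℕ → ℝ → ℝ := fun k y => (k : ℝ) * y ^ (k - 1) /
    (Real.Gamma (μ + (k : ℝ) + 1) * (Nat.factorial k : ℝ)) with hg'
  have hs : ∀ y, Summable (fun k => g' k y) := by
    intro y
    rw [← summable_nat_add_iff 1]
    refine (bF_summable (show -1 < μ + 1 by linarith) y).congr ?_
    intro k
    exact (key k y).symm
  have hsum : ∑' k, g' k z = bF (μ + 1) z := by
    rw [(hs z).tsum_eq_zero_add]
    simp only [hg']
    simp only [Nat.cast_zero, zero_mul, zero_div, zero_add]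
    unfold bF
    exact tsum_congr (fun k => key k z)
  rw [← hsum]
  refine hasDerivAt_tsum_of_isPreconnected (u := fun k => g' k (|z| + 1))
    (t := Set.Ioo (-(|z| + 1)) (|z| + 1)) (y₀ := z) (hs _) isOpen_Ioo isPreconnected_Ioo
    ?_ ?_ ?_ (bF_summable hμ z) ?_
  · intro k y _
    exact (hasDerivAt_pow k y).div_const _
  · intro k y hy
    have hd := bF_den_pos hμ k
    simp only [hg', norm_div, norm_mul, norm_pow, Real.norm_eq_abs, ← abs_mul]
    rw [abs_of_pos hd, Nat.abs_cast]
    have : |y| ≤ |z| + 1 := abs_le.2 ⟨hy.1.le, hy.2.le⟩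
    gcongr
  · constructor <;> [linarith [neg_abs_le z]; linarith [le_abs_self z]]
  · constructor <;> [linarith [neg_abs_le z]; linarith [le_abs_self z]]

lemma bF_rec {μ : ℝ} (hμ : -1 < μ) (z : ℝ) :
    bF μ z = (μ + 1) * bF (μ + 1) z + z * bF (μ + 2) z := by
  have h0 := bF_summable hμ z
  have h1 := bF_summable (show -1 < μ + 1 by linarith) z
  have h2 := bF_summable (show -1 < μ + 2 by linarith) z
  unfold bF
  rw [← tsum_mul_left, ← tsum_mul_left, h0.tsum_eq_zero_add, (h1.mul_left (μ+1)).tsum_eq_zero_add,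
    add_assoc (_ * _), ← Summable.tsum_add ((summable_nat_add_iff 1).2 (h1.mul_left (μ+1))) (h2.mul_left z)]
  congr 1
  · have := Real.Gamma_add_one (show μ + 1 ≠ 0 by linarith)
    have hp := Real.Gamma_pos_of_pos (show 0 < μ + 1 by linarith)
    simp only [pow_zero, Nat.cast_zero, Nat.factorial_zero, Nat.cast_one, mul_one, add_zero, this]
    have : μ + 1 ≠ 0 := by linarith
    field_simp
  · refine tsum_congr fun k => ?_
    have hk : (0 : ℝ) ≤ k := Nat.cast_nonneg k
    have hp := Real.Gamma_pos_of_pos (show 0 < μ + (k:ℝ) + 2 by linarith)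
    have e1 : μ + ((k + 1 : ℕ) : ℝ) + 1 = μ + k + 2 := by push_cast; ring
    have e2 : μ + 1 + ((k + 1 : ℕ) : ℝ) + 1 = (μ + k + 2) + 1 := by push_cast; ring
    have e3 : μ + 2 + (k : ℝ) + 1 = (μ + k + 2) + 1 := by ring
    have hn : μ + (k:ℝ) + 2 ≠ 0 := by linarith
    rw [e1, e2, e3, Real.Gamma_add_one hn, Nat.factorial_succ]
    push_cast
    have : (Nat.factorial k : ℝ) ≠ 0 := by positivity
    have : (k:ℝ) + 1 ≠ 0 := by linarith
    field_simp
    ring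

lemma bF_pos {μ : ℝ} (hμ : -1 < μ) {z : ℝ} (hz : 0 ≤ z) : 0 < bF μ z := by
  refine (bF_summable hμ z).tsum_pos (fun k => ?_) 0 ?_
  · have := bF_den_pos hμ k
    positivity
  · have := bF_den_pos hμ 0
    simp only [pow_zero]
    positivity

/-- The even entire factor, with its derivative. -/
noncomputable def bP (a t : ℝ) : ℝ := bF (a - 1/2) (t ^ 2 / 4)
noncomputable def bQ (a t : ℝ) : ℝ := t / 2 * bF (a + 1/2) (t ^ 2 / 4)

lemma bP_hasDerivAt {a : ℝ} (ha : 0 < a) (t : ℝ) : HasDerivAt (bP a) (bQ a t) t := by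
  have h := (bF_hasDerivAt (μ := a - 1/2) (by linarith) (t^2/4)).comp t
    ((hasDerivAt_pow 2 t).div_const 4)
  refine h.congr_deriv ?_
  unfold bQ
  rw [show a - 1/2 + 1 = a + 1/2 by ring]
  norm_num
  ring

lemma bQ_hasDerivAt {a : ℝ} (ha : 0 < a) {t : ℝ} (ht : 0 < t) :
    HasDerivAt (bQ a) (bP a t - 2 * a / t * bQ a t) t := by
  have h := ((hasDerivAt_id t).div_const 2).mul
    ((bF_hasDerivAt (μ := a + 1/2) (by linarith) (t^2/4)).comp t
    ((hasDerivAt_pow 2 t).div_const 4))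
  refine h.congr_deriv ?_
  have hr := bF_rec (μ := a - 1/2) (by linarith) (t^2/4)
  unfold bQ bP
  rw [hr, show a - 1/2 + 1 = a + 1/2 by ring, show a - 1/2 + 2 = a + 1/2 + 1 by ring]
  simp only [id, Function.comp]
  field_simp
  norm_num
  ring

lemma bQ_continuous {a : ℝ} (ha : 0 < a) : Continuous (bQ a) := by
  have : Continuous (bF (a + 1/2)) :=
    continuous_iff_continuousAt.2 fun z => (bF_hasDerivAt (by linarith) z).continuousAt
  unfold bQ
  fun_prop

lemma bP_continuous {a : ℝ} (ha : 0 < a) : Continuous (bP a) :=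
  continuous_iff_continuousAt.2 fun z => (bP_hasDerivAt ha z).continuousAt

lemma bP_pos {a : ℝ} (ha : 0 < a) (t : ℝ) : 0 < bP a t :=
  bF_pos (by linarith) (by positivity)

lemma besselI_eq_s6 {ν t : ℝ} (hν : -(1/2) < ν) (ht : 0 < t) :
    besselI ν t = (t / 2) ^ ν * bP (ν + 1/2) t := by
  unfold besselI bP bF
  rw [← tsum_mul_left, show ν + 1/2 - 1/2 = ν by ring]
  refine tsum_congr fun k => ?_
  rw [Real.rpow_add (by positivity), show (2:ℝ) * (k:ℝ) = ((2 * k : ℕ) : ℝ) by push_cast; ring,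
    Real.rpow_natCast, pow_mul, mul_div_assoc, show (t/2)^2 = t^2/4 by ring]

lemma w_mono_ge {a : ℝ} (ha : 1 ≤ a) :
    MonotoneOn (fun t => t ^ a * Real.exp (-t) * bP a t) (Set.Ici 0) := by
  have ha0 : 0 < a := by linarith
  have cP := bP_continuous ha0
  have cQ := bQ_continuous ha0
  have hc1 : Continuous (fun t : ℝ => t ^ (a - 1)) := Real.continuous_rpow_const (by linarith)
  have hc2 : Continuous (fun t : ℝ => t ^ a) := Real.continuous_rpow_const (by linarith)
  set D : ℝ → ℝ := fun t => Real.exp t * t ^ (a - 1) * (a * bP a t - t * bP a t + t * bQ a t) with hD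
  have hDd : ∀ t : ℝ, 0 < t → HasDerivAt D (Real.exp t * t ^ (a - 1) * (a * (a - 1) / t * bP a t)) t := by
    intro t ht
    have hP := bP_hasDerivAt ha0 t
    have hQ := bQ_hasDerivAt ha0 ht
    have h := ((Real.hasDerivAt_exp t).mul (Real.hasDerivAt_rpow_const (p := a - 1) (Or.inl ht.ne'))).mul
      (((hP.const_mul a).sub ((hasDerivAt_id t).mul hP)).add ((hasDerivAt_id t).mul hQ))
    refine h.congr_deriv ?_
    simp only [id, Pi.mul_apply, Pi.add_apply, Pi.sub_apply]
    rw [Real.rpow_sub_one ht.ne' (a - 1)]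
    field_simp
    ring
  have hDm : MonotoneOn D (Set.Ici 0) := by
    refine monotoneOn_of_deriv_nonneg (convex_Ici 0) (by fun_prop) ?_ ?_
    · intro t ht
      rw [interior_Ici] at ht
      exact (hDd t ht).differentiableAt.differentiableWithinAt
    · intro t ht
      rw [interior_Ici] at ht
      have ht' : 0 < t := ht
      rw [(hDd t ht).deriv]
      have := bP_pos ha0 t
      have : 0 ≤ a - 1 := by linarith
      positivity
  have hDpos : ∀ t : ℝ, 0 < t → 0 ≤ a * bP a t - t * bP a t + t * bQ a t := by
    intro t ht
    have h0 : 0 ≤ D 0 := by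
      have := bP_pos ha0 0
      simp only [hD]
      have h2 : (0:ℝ) ≤ 0 ^ (a - 1) := Real.rpow_nonneg le_rfl _
      simp only [zero_mul, sub_zero, add_zero]
      positivity
    have h1 : 0 ≤ D t := h0.trans (hDm Set.self_mem_Ici ht.le ht.le)
    have h3 : 0 < Real.exp t * t ^ (a - 1) := by positivity
    exact nonneg_of_mul_nonneg_right h1 h3
  have hd : ∀ t : ℝ, 0 < t → HasDerivAt (fun t => t ^ a * Real.exp (-t) * bP a t)
      (t ^ (a - 1) * Real.exp (-t) * (a * bP a t - t * bP a t + t * bQ a t)) t := by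
    intro t ht
    have h := ((Real.hasDerivAt_rpow_const (p := a) (Or.inl ht.ne')).mul
      ((hasDerivAt_neg t).exp)).mul (bP_hasDerivAt ha0 t)
    refine h.congr_deriv ?_
    simp only [Pi.mul_apply]
    rw [Real.rpow_sub_one ht.ne' a]
    field_simp
    ring
  refine monotoneOn_of_deriv_nonneg (convex_Ici 0) (by fun_prop) ?_ ?_
  · intro t ht
    rw [interior_Ici] at ht
    exact (hd t ht).differentiableAt.differentiableWithinAt
  · intro t ht
    rw [interior_Ici] at ht
    have ht' : 0 < t := ht
    rw [(hd t ht).deriv]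
    have := hDpos t ht
    positivity

noncomputable def bR (a t : ℝ) : ℝ := √(t ^ 2 + (1 + a) ^ 2)

lemma bR_sq (a t : ℝ) : bR a t ^ 2 = t ^ 2 + (1 + a) ^ 2 := Real.sq_sqrt (by positivity)

lemma bR_ge {a : ℝ} (ha : 0 < a) (t : ℝ) : 1 + a ≤ bR a t := by
  refine Real.le_sqrt_of_sq_le ?_
  nlinarith [sq_nonneg t]

lemma bR_pos {a : ℝ} (ha : 0 < a) (t : ℝ) : 0 < bR a t := by
  linarith [bR_ge ha t]

lemma bR_continuous (a : ℝ) : Continuous (bR a) := by unfold bR; fun_prop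

lemma bR_hasDerivAt {a : ℝ} (ha : 0 < a) (t : ℝ) : HasDerivAt (bR a) (t / bR a t) t := by
  have h := (((hasDerivAt_pow 2 t).add_const ((1 + a) ^ 2))).sqrt (by positivity)
  refine h.congr_deriv ?_
  unfold bR
  norm_num
  rw [mul_div_mul_left _ _ (by norm_num)]

lemma M_mono {a : ℝ} (ha0 : 0 < a) :
    MonotoneOn (fun t => bP a t * (Real.exp (-bR a t) * bR a t ^ a)) (Set.Ici 0) := by
  have cP := bP_continuous ha0
  have cQ := bQ_continuous ha0
  have cR := bR_continuous a
  have hR0 : ∀ t, bR a t ≠ 0 := fun t => (bR_pos ha0 t).ne'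
  have cRa : Continuous (fun t => bR a t ^ a) := cR.rpow_const (fun t => Or.inl (hR0 t))
  have cRb : Continuous (fun t => bR a t ^ (-a)) := cR.rpow_const (fun t => Or.inl (hR0 t))
  have hc2 : Continuous (fun t : ℝ => t ^ (2 * a)) := Real.continuous_rpow_const (by linarith)
  set ρ : ℝ → ℝ := fun t => t / bR a t - a * (t / bR a t ^ 2) with hρ
  have cρ : Continuous ρ := by
    have : Continuous (fun t => t / bR a t) := continuous_id.div cR hR0
    have : Continuous (fun t => t / bR a t ^ 2) :=
      continuous_id.div (cR.pow 2) (fun t => pow_ne_zero 2 (hR0 t))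
    fun_prop
  set V : ℝ → ℝ := fun t => t ^ (2 * a) * (Real.exp (bR a t) * bR a t ^ (-a)) * (bQ a t - bP a t * ρ t)
    with hV
  have hVd : ∀ t : ℝ, 0 < t → HasDerivAt V
      (t ^ (2 * a) * (Real.exp (bR a t) * bR a t ^ (-a)) * bP a t *
        (((1 + a) ^ 2 - a + a ^ 2) * bR a t ^ 2 - (2 * a + 1) * (1 + a) ^ 2 * bR a t
          + (a ^ 2 + 2 * a) * (1 + a) ^ 2) / bR a t ^ 4) t := by
    intro t ht
    have hP := bP_hasDerivAt ha0 t
    have hQ := bQ_hasDerivAt ha0 ht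
    have hR := bR_hasDerivAt ha0 t
    have hρd : HasDerivAt ρ _ t := ((hasDerivAt_id t).div hR (hR0 t)).sub
      (((hasDerivAt_id t).div (hR.pow 2) (pow_ne_zero 2 (hR0 t))).const_mul a)
    have h := ((Real.hasDerivAt_rpow_const (p := 2 * a) (Or.inl ht.ne')).mul
      (hR.exp.mul (hR.rpow_const (p := -a) (Or.inl (hR0 t))))).mul (hQ.sub (hP.mul hρd))
    refine h.congr_deriv ?_
    simp only [id, Pi.mul_apply, Pi.add_apply, Pi.sub_apply, Pi.pow_apply, hρ]
    rw [Real.rpow_sub_one ht.ne' (2 * a), Real.rpow_sub_one (hR0 t) (-a)]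
    have hsq := bR_sq a t
    have hb : (1 + a) ^ 2 = bR a t ^ 2 - t ^ 2 := by linarith
    rw [hb]
    have := hR0 t
    generalize bR a t = R at *
    generalize R ^ (-a) = X
    generalize t ^ (2 * a) = Y
    generalize Real.exp R = Z
    field_simp
    norm_num
    ring
  have hN : ∀ t, 0 ≤ ((1 + a) ^ 2 - a + a ^ 2) * bR a t ^ 2 - (2 * a + 1) * (1 + a) ^ 2 * bR a t
          + (a ^ 2 + 2 * a) * (1 + a) ^ 2 := by
    intro t
    obtain ⟨d, hd⟩ : ∃ d, bR a t = 1 + a + d := ⟨bR a t - (1 + a), by ring⟩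
    have hd0 : 0 ≤ d := by linarith [bR_ge ha0 t]
    rw [hd]
    have e : ((1 + a) ^ 2 - a + a ^ 2) * (1 + a + d) ^ 2 - (2 * a + 1) * (1 + a) ^ 2 * (1 + a + d)
          + (a ^ 2 + 2 * a) * (1 + a) ^ 2
        = (1 + a) ^ 2 * a ^ 2 + d * ((1 + a) * (a ^ 2 + (a - 1/2) ^ 2 + 3/4)) +
          (2 * a ^ 2 + a + 1) * d ^ 2 := by ring
    rw [e]
    positivity
  have hVm : MonotoneOn V (Set.Ici 0) := by
    refine monotoneOn_of_deriv_nonneg (convex_Ici 0) (by fun_prop) ?_ ?_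
    · intro t ht
      rw [interior_Ici] at ht
      exact (hVd t ht).differentiableAt.differentiableWithinAt
    · intro t ht
      rw [interior_Ici] at ht
      have ht' : 0 < t := ht
      rw [(hVd t ht).deriv]
      have h1 := bP_pos ha0 t
      have h2 := hN t
      have h3 := bR_pos ha0 t
      exact div_nonneg (mul_nonneg (by positivity) h2) (by positivity)
  have hVpos : ∀ t : ℝ, 0 < t → 0 ≤ bQ a t - bP a t * ρ t := by
    intro t ht
    have h0 : V 0 = 0 := by
      simp only [hV]
      rw [Real.zero_rpow (by positivity)]
      ring
    have h1 : 0 ≤ V t := h0 ▸ (hVm Set.self_mem_Ici ht.le ht.le)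
    have hR := bR_pos ha0 t
    have h3 : 0 < t ^ (2 * a) * (Real.exp (bR a t) * bR a t ^ (-a)) := by positivity
    exact nonneg_of_mul_nonneg_right h1 h3
  have hd : ∀ t : ℝ, HasDerivAt (fun t => bP a t * (Real.exp (-bR a t) * bR a t ^ a))
      (Real.exp (-bR a t) * bR a t ^ a * (bQ a t - bP a t * ρ t)) t := by
    intro t
    have hR := bR_hasDerivAt ha0 t
    have h := (bP_hasDerivAt ha0 t).mul (hR.neg.exp.mul (hR.rpow_const (p := a) (Or.inl (hR0 t))))
    refine h.congr_deriv ?_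
    simp only [Pi.mul_apply, Pi.neg_apply, hρ]
    rw [Real.rpow_sub_one (hR0 t) a]
    have := hR0 t
    field_simp
    ring
  refine monotoneOn_of_deriv_nonneg (convex_Ici 0) (by fun_prop) ?_ ?_
  · intro t ht
    exact (hd t).differentiableAt.differentiableWithinAt
  · intro t ht
    rw [interior_Ici] at ht
    have ht' : 0 < t := ht
    rw [(hd t).deriv]
    have := hVpos t ht
    have h3 := bR_pos ha0 t
    positivity

lemma psi_le {a : ℝ} (ha0 : 0 < a) (ha1 : a < 1) {t x : ℝ} (ht : 0 < t) (hx : t ≤ x) :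
    a * Real.log (t / bR a t) + (bR a t - t) ≤ 1 + (a * Real.log (x / bR a x) + (bR a x - x)) := by
  have hx0 : 0 < x := by linarith
  have hRt := bR_pos ha0 t
  have hRx := bR_pos ha0 x
  have hst := bR_sq a t
  have hsx := bR_sq a x
  have hgx := bR_ge ha0 x
  set T := bR a t
  set X := bR a x
  obtain ⟨τ, hτ⟩ : ∃ τ, τ = t / T := ⟨_, rfl⟩
  obtain ⟨σ, hσ⟩ : ∃ σ, σ = x / X := ⟨_, rfl⟩
  have hτ0 : 0 < τ := by rw [hτ]; positivity
  have hσ0 : 0 < σ := by rw [hσ]; positivity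
  have htτ : t = T * τ := by rw [hτ]; field_simp
  have hxσ : x = X * σ := by rw [hσ]; field_simp
  have hσ1 : σ ≤ 1 := by
    rw [hσ, div_le_one hRx]
    exact abs_le_of_sq_le_sq' (by nlinarith) hRx.le |>.2
  have hτ1 : τ ≤ 1 := by
    rw [hτ, div_le_one hRt]
    exact abs_le_of_sq_le_sq' (by nlinarith) hRt.le |>.2
  have hτσ : τ ≤ σ := by
    rw [hτ, hσ, div_le_div_iff₀ hRt hRx]
    refine abs_le_of_sq_le_sq' ?_ (by positivity) |>.2
    rw [mul_pow, mul_pow, hst, hsx]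
    have : t ^ 2 ≤ x ^ 2 := by gcongr
    nlinarith [mul_le_mul_of_nonneg_right this (sq_nonneg (1 + a))]
  have h1 : T - t ≤ (1 + a) * (1 - τ / 2) := by
    refine abs_le_of_sq_le_sq' ?_ (mul_nonneg (by linarith) (by linarith)) |>.2
    have hb : (1 + a) ^ 2 = T ^ 2 * (1 - τ ^ 2) := by rw [htτ] at hst; linarith
    rw [mul_pow, hb]
    have e1 : (T - t) ^ 2 = T ^ 2 * (1 - τ) ^ 2 := by rw [htτ]; ring
    rw [e1, mul_assoc]
    refine mul_le_mul_of_nonneg_left ?_ (by positivity)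
    have e2 : (1 - τ ^ 2) * (1 - τ / 2) ^ 2 - (1 - τ) ^ 2 = (1 - τ) * τ * (1 - 3/4 * τ + τ ^ 2 / 4) := by ring
    have : 0 ≤ (1 - τ) * τ * (1 - 3/4 * τ + τ ^ 2 / 4) :=
      mul_nonneg (mul_nonneg (by linarith) hτ0.le) (by nlinarith)
    linarith
  have h2 : (1 + a) * (1 - σ) ≤ X - x := by
    rw [hxσ]
    nlinarith
  have hlog : Real.log τ - Real.log σ ≤ τ / σ - 1 := by
    rw [← Real.log_div hτ0.ne' hσ0.ne']
    exact Real.log_le_sub_one_of_pos (by positivity)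
  rw [← hτ, ← hσ]
  obtain ⟨l, hl⟩ : ∃ l, l = τ / σ := ⟨_, rfl⟩
  have hl0 : 0 ≤ l := by rw [hl]; positivity
  have hl1 : l ≤ 1 := by rw [hl, div_le_one hσ0]; exact hτσ
  have hτl : τ = l * σ := by rw [hl]; field_simp
  rw [← hl] at hlog
  have h3 := mul_le_mul_of_nonneg_left hlog ha0.le
  have h4 : 0 ≤ (1 - l) * ((1 + a) * (1 - σ)) := mul_nonneg (by linarith) (mul_nonneg (by linarith) (by linarith))
  have h5 : 0 ≤ l * (1 - (1 + a) * σ / 2) := mul_nonneg hl0 (by nlinarith)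
  rw [hτl] at h1
  rw [hτl] at h3 ⊢
  nlinarith

lemma w_quasi {a : ℝ} (ha0 : 0 < a) (ha1 : a < 1) {t x : ℝ} (ht : 0 < t) (hx : t ≤ x) :
    t ^ a * Real.exp (-t) * bP a t ≤ Real.exp 1 * (x ^ a * Real.exp (-x) * bP a x) := by
  have key : ∀ s : ℝ, 0 < s → s ^ a * Real.exp (-s) * bP a s =
      (bP a s * (Real.exp (-bR a s) * bR a s ^ a)) *
        Real.exp (a * Real.log (s / bR a s) + (bR a s - s)) := by
    intro s hs
    have hR := bR_pos ha0 s
    have e : Real.exp (a * Real.log (s / bR a s)) = s ^ a / bR a s ^ a := by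
      rw [← Real.div_rpow hs.le hR.le, Real.rpow_def_of_pos (by positivity), mul_comm]
    have hp : 0 < bR a s ^ a := by positivity
    rw [Real.exp_add, e, sub_eq_add_neg, Real.exp_add, Real.exp_neg (bR a s)]
    field_simp
  rw [key t ht, key x (by linarith)]
  have hm := M_mono ha0 (Set.mem_Ici.2 ht.le) (Set.mem_Ici.2 (by linarith : (0:ℝ) ≤ x)) hx
  have hp := Real.exp_le_exp.2 (psi_le ha0 ha1 ht hx)
  rw [Real.exp_add 1] at hp
  have hPt := bP_pos ha0 x
  have hRt := bR_pos ha0 x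
  calc _ ≤ _ := mul_le_mul hm hp (Real.exp_pos _).le (by positivity)
    _ = _ := by ring

lemma int_exp_lt {d x : ℝ} (hd : 0 < d) :
    ∫ t in (0:ℝ)..x, Real.exp (d * t) = (Real.exp (d * x) - 1) / d := by
  rw [intervalIntegral.integral_comp_mul_left (f := Real.exp) hd.ne', integral_exp]
  simp
  field_simp

lemma cheb {a d x : ℝ} (ha0 : 0 < a) (ha1 : a < 1) (hd : 0 < d) (hx : 0 < x) :
    ∫ t in (0:ℝ)..x, t ^ (a - 1) * Real.exp (d * t) ≤
      x ^ (a - 1) / a * ((Real.exp (d * x) - 1) / d) := by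
  obtain ⟨m, hm⟩ : ∃ m, m = x ^ (a - 1) / a := ⟨_, rfl⟩
  have hm0 : 0 < m := by rw [hm]; positivity
  obtain ⟨s, hs⟩ : ∃ s, s = m ^ ((a - 1)⁻¹) := ⟨_, rfl⟩
  have hs0 : 0 < s := by rw [hs]; positivity
  have hsm : s ^ (a - 1) = m := by
    rw [hs, ← Real.rpow_mul hm0.le, inv_mul_cancel₀ (by linarith), Real.rpow_one]
  have i1 : IntervalIntegrable (fun t : ℝ => t ^ (a - 1)) volume 0 x :=
    intervalIntegral.intervalIntegrable_rpow' (by linarith)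
  have i2 : IntervalIntegrable (fun t : ℝ => t ^ (a - 1) * Real.exp (d * t)) volume 0 x :=
    i1.mul_continuousOn (by fun_prop)
  have i3 : IntervalIntegrable (fun t : ℝ => Real.exp (d * t)) volume 0 x :=
    Continuous.intervalIntegrable (by fun_prop) _ _
  have hle : ∫ t in (0:ℝ)..x, t ^ (a - 1) * Real.exp (d * t) ≤
      ∫ t in (0:ℝ)..x, (m * Real.exp (d * t) + Real.exp (d * s) * (t ^ (a - 1) - m)) := by
    refine intervalIntegral.integral_mono_on_of_le_Ioo hx.le i2
      ((i3.const_mul m).add ((i1.sub intervalIntegrable_const).const_mul _)) ?_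
    intro t ht
    have ht0 : 0 < t := ht.1
    rcases le_total t s with h | h
    · have h1 : m ≤ t ^ (a - 1) := hsm ▸ Real.rpow_le_rpow_of_nonpos ht0 h (by linarith)
      have h2 : Real.exp (d * t) ≤ Real.exp (d * s) := by gcongr
      nlinarith
    · have h1 : t ^ (a - 1) ≤ m := hsm ▸ Real.rpow_le_rpow_of_nonpos hs0 h (by linarith)
      have h2 : Real.exp (d * s) ≤ Real.exp (d * t) := by gcongr
      nlinarith
  refine hle.trans (le_of_eq ?_)
  rw [intervalIntegral.integral_add (i3.const_mul m) ((i1.sub intervalIntegrable_const).const_mul _),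
    intervalIntegral.integral_const_mul, intervalIntegral.integral_const_mul,
    intervalIntegral.integral_sub i1 intervalIntegrable_const, int_exp_lt hd,
    integral_rpow (Or.inl (by linarith)), intervalIntegral.integral_const, ← hm]
  have : (x ^ (a - 1 + 1) - 0 ^ (a - 1 + 1)) / (a - 1 + 1) = x * m := by
    rw [sub_add_cancel, Real.zero_rpow ha0.ne', hm, Real.rpow_sub_one hx.ne']
    field_simp
    ring
  rw [this]
  simp

lemma main_int {a d x : ℝ} (ha0 : 0 < a) (hd : 0 < d) (hx : 0 < x) :
    ∫ t in (0:ℝ)..x, t ^ (2 * a - 1) * (Real.exp ((d - 1) * t) * bP a t) <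
      (3 + a) / (a * d) * (x ^ (2 * a - 1) * (Real.exp ((d - 1) * x) * bP a x)) := by
  have cP := bP_continuous ha0
  have hPx := bP_pos ha0 x
  have key : ∀ t : ℝ, 0 < t → t ^ (2 * a - 1) * (Real.exp ((d - 1) * t) * bP a t) =
      t ^ (a - 1) * Real.exp (d * t) * (t ^ a * Real.exp (-t) * bP a t) := by
    intro t ht
    rw [show 2 * a - 1 = (a - 1) + a by ring, Real.rpow_add ht,
      show (d - 1) * t = d * t + -t by ring, Real.exp_add]
    ring
  have i0 : IntervalIntegrable (fun t : ℝ => t ^ (2 * a - 1) * (Real.exp ((d - 1) * t) * bP a t)) volume 0 x :=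
    (intervalIntegral.intervalIntegrable_rpow' (by linarith)).mul_continuousOn (by fun_prop)
  rw [key x hx]
  obtain ⟨w, hw⟩ : ∃ w, w = x ^ a * Real.exp (-x) * bP a x := ⟨_, rfl⟩
  have hw0 : 0 < w := by rw [hw]; positivity
  rw [← hw]
  have hxa : 0 < x ^ (a - 1) := by positivity
  have hE : 0 < Real.exp (d * x) := Real.exp_pos _
  rcases lt_or_ge a 1 with ha1 | ha1
  · have i2 : IntervalIntegrable (fun t : ℝ => Real.exp 1 * w * (t ^ (a - 1) * Real.exp (d * t))) volume 0 x :=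
      ((intervalIntegral.intervalIntegrable_rpow' (by linarith)).mul_continuousOn (by fun_prop)).const_mul _
    have h1 := intervalIntegral.integral_mono_on_of_le_Ioo hx.le i0 i2 (fun t ht => by
      rw [key t ht.1, hw]
      have := w_quasi ha0 ha1 ht.1 ht.2.le
      have ht0 : 0 < t := ht.1
      have h3 : 0 < t ^ (a - 1) * Real.exp (d * t) := by positivity
      nlinarith [mul_le_mul_of_nonneg_left this h3.le])
    rw [intervalIntegral.integral_const_mul] at h1
    have h2 := cheb ha0 ha1 hd hx
    have h4 : Real.exp 1 < 3 + a := by linarith [Real.exp_one_lt_d9]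
    calc _ ≤ _ := h1
      _ ≤ Real.exp 1 * w * (x ^ (a - 1) / a * ((Real.exp (d * x) - 1) / d)) := by gcongr
      _ ≤ Real.exp 1 * w * (x ^ (a - 1) / a * (Real.exp (d * x) / d)) := by gcongr; linarith
      _ < (3 + a) * w * (x ^ (a - 1) / a * (Real.exp (d * x) / d)) := by gcongr
      _ = _ := by field_simp
  · have i2 : IntervalIntegrable (fun t : ℝ => x ^ (a - 1) * w * (Real.exp (d * t))) volume 0 x :=
      Continuous.intervalIntegrable (by fun_prop) _ _
    have h1 := intervalIntegral.integral_mono_on_of_le_Ioo hx.le i0 i2 (fun t ht => by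
      have ht0 : 0 < t := ht.1
      have h5 := w_mono_ge ha1 (Set.mem_Ici.2 ht0.le) (Set.mem_Ici.2 hx.le) ht.2.le
      simp only at h5
      rw [← hw] at h5
      have h6 : t ^ (a - 1) ≤ x ^ (a - 1) := Real.rpow_le_rpow ht0.le ht.2.le (by linarith)
      have h7 := bP_pos ha0 t
      rw [key t ht.1]
      calc _ ≤ x ^ (a - 1) * Real.exp (d * t) * w := by gcongr
        _ = _ := by ring)
    rw [intervalIntegral.integral_const_mul, int_exp_lt hd] at h1
    have h8 : 1 ≤ (3 + a) / a := by rw [le_div_iff₀ ha0]; linarith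
    calc _ ≤ _ := h1
      _ < x ^ (a - 1) * w * (Real.exp (d * x) / d) := by gcongr; linarith
      _ ≤ (3 + a) / a * (x ^ (a - 1) * w * (Real.exp (d * x) / d)) := le_mul_of_one_le_left (by positivity) h8
      _ = _ := by field_simp

theorem stmt_6 (γ ν : ℝ) (hγ0 : 0 < γ) (hγ1 : γ < 1) (hν : -(1/2) < ν) (x : ℝ) (hx : 0 < x) :
    ∫ t in (0 : ℝ)..x, Real.exp (-γ * t) * t ^ ν * besselI ν t <
      ((2 * ν + 7) / ((2 * ν + 1) * (1 - γ))) *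
        (Real.exp (-γ * x) * x ^ ν * besselI ν x) := by
  have key : ∀ t : ℝ, 0 < t → Real.exp (-γ * t) * t ^ ν * besselI ν t =
      (1 / 2 : ℝ) ^ ν * (t ^ (2 * (ν + 1/2) - 1) * (Real.exp (((1 - γ) - 1) * t) * bP (ν + 1/2) t)) := by
    intro t ht
    rw [besselI_eq_s6 hν ht, show t / 2 = (1/2) * t by ring, Real.mul_rpow (by norm_num) ht.le,
      show 2 * (ν + 1/2) - 1 = ν + ν by ring, Real.rpow_add ht, show (1 - γ) - 1 = -γ by ring]
    ring
  have hI : ∫ t in (0 : ℝ)..x, Real.exp (-γ * t) * t ^ ν * besselI ν t =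
      ∫ t in (0 : ℝ)..x, (1 / 2 : ℝ) ^ ν *
        (t ^ (2 * (ν + 1/2) - 1) * (Real.exp (((1 - γ) - 1) * t) * bP (ν + 1/2) t)) := by
    refine intervalIntegral.integral_congr_ae (Filter.Eventually.of_forall fun t ht => ?_)
    rw [Set.uIoc_of_le hx.le] at ht
    exact key t ht.1
  rw [hI, intervalIntegral.integral_const_mul, key x hx]
  have hm := main_int (a := ν + 1/2) (d := 1 - γ) (by linarith) (by linarith) hx
  have e : (3 + (ν + 1/2)) / ((ν + 1/2) * (1 - γ)) = (2 * ν + 7) / ((2 * ν + 1) * (1 - γ)) := by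
    have h1 : (ν + 1/2) ≠ 0 := by linarith
    have h2 : 1 - γ ≠ 0 := by linarith
    have h3 : 2 * ν + 1 ≠ 0 := by linarith
    rw [div_eq_div_iff (mul_ne_zero h1 h2) (mul_ne_zero h3 h2)]
    ring
  rw [e] at hm
  have hp : (0:ℝ) < (1/2) ^ ν := by positivity
  nlinarith [mul_lt_mul_of_pos_left hm hp]
end
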